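/- arXiv:1609.07027 — 2 statements merged into one kernel-verified Lean document; each statement's English description precedes it below -/
import Mathlib

section
/- Consider an n-server PIR scheme for a database of k records of R bits each, with k ≥ 3 and R ≥ 1, whose download complexity is exactly R + 1. Then for every possible query tuple (q_1, …, q_n), each server responds with at most one bit (d_r(q_r) ≤ 1 for every r), and the total number of bits downloaded satisfies R ≤ Σ_r d_r(q_r) ≤ R + 1; that is, exactly R or R + 1 servers respond with one bit each. -/
open scoped ENNReal

/-- An `n`-server PIR scheme for a database of `k` records of `R` bits each. -/
structure PIRScheme (n k R : ℕ) where
  /-- The query set for each server. -/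
  Q : Fin n → Type
  /-- Each query set is finite. -/
  fintypeQ : ∀ r, Fintype (Q r)
  /-- The storage size (in bits) of each server. -/
  s : Fin n → ℕ
  /-- The encoding map of each server. -/
  E : (r : Fin n) → (Fin k → Fin R → Bool) → (Fin (s r) → Bool)
  /-- For each record index `ℓ`, a probability distribution on query tuples. -/
  D : Fin k → PMF ((r : Fin n) → Q r)
  /-- The response length of each server on each query. -/
  d : (r : Fin n) → Q r → ℕ
  /-- The deterministic response map of each server. -/
  resp : (r : Fin n) → (q : Q r) → (Fin (s r) → Bool) → (Fin (d r q) → Bool)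
  /-- The reconstruction function. -/
  recon : (ℓ : Fin k) → (q : (r : Fin n) → Q r) →
    ((r : Fin n) → (Fin (d r (q r)) → Bool)) → (Fin R → Bool)
  /-- Correctness. -/
  correct : ∀ (X : Fin k → Fin R → Bool) (ℓ : Fin k) (q : (r : Fin n) → Q r),
    q ∈ (D ℓ).support →
    recon ℓ q (fun r => resp r (q r) (E r X)) = X ℓ
  /-- Privacy: the marginal of each query component does not depend on `ℓ`. -/
  privacy : ∀ (r : Fin n) (ℓ ℓ' : Fin k),
    (D ℓ).map (fun q => q r) = (D ℓ').map (fun q => q r)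

attribute [instance] PIRScheme.fintypeQ

/-- A query tuple is possible if it lies in the support of `D ℓ` for some `ℓ`. -/
def PIRScheme.Possible {n k R : ℕ} (S : PIRScheme n k R)
    (q : (r : Fin n) → S.Q r) : Prop :=
  ∃ ℓ, q ∈ (S.D ℓ).support

/-- The download complexity: the maximum, over possible query tuples, of the
total number of downloaded bits. -/
noncomputable def PIRScheme.downloadComplexity {n k R : ℕ} (S : PIRScheme n k R) : ℕ :=
  letI : DecidablePred S.Possible := Classical.decPred _
  (Finset.univ.filter S.Possible).sup (fun q => ∑ r, S.d r (q r))

theorem pir_abstract_le_one {k R d : ℕ} (hk : 3 ≤ k) {β : Type} [Fintype β]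
    (hβ : Fintype.card β = 2 ^ d) (F : (Fin k → Fin R → Bool) → β)
    (H : ∀ ℓ : Fin k, ∃ (γ : Type) (_ : Fintype γ) (m : ℕ) (G : (Fin k → Fin R → Bool) → γ),
      Fintype.card γ = 2 ^ m ∧ d + m ≤ R + 1 ∧
      ∀ X Y, F X = F Y → G X = G Y → X ℓ = Y ℓ) : d ≤ 1 := by
  classical
  by_contra hd
  have hcardV : Fintype.card (Fin R → Bool) = 2 ^ R := by simp
  -- dependence on every record
  have dep : ∀ (ℓ : Fin k) (X : Fin k → Fin R → Bool),
      ∃ v, F (Function.update X ℓ v) ≠ F X := by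
    intro ℓ X
    by_contra hcon
    push Not at hcon
    obtain ⟨γ, _, m, G, hγ, hm, hG⟩ := H ℓ
    have hinj : Function.Injective (fun v => G (Function.update X ℓ v)) := by
      intro v w hvw
      have := hG _ _ ((hcon v).trans (hcon w).symm) hvw
      simpa using this
    have hle := Fintype.card_le_of_injective _ hinj
    rw [hcardV, hγ] at hle
    have := (Nat.pow_le_pow_iff_right (by norm_num : 1 < 2)).1 hle
    omega
  let l0 : Fin k := ⟨0, by omega⟩
  let l1 : Fin k := ⟨1, by omega⟩
  let l2 : Fin k := ⟨2, by omega⟩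
  have h01 : l0 ≠ l1 := by simp [l0, l1]
  have h02 : l0 ≠ l2 := by simp [l0, l2]
  have h12 : l1 ≠ l2 := by simp [l1, l2]
  -- a value of record zero leaving at most two values of `F`
  obtain ⟨x, hx⟩ : ∃ x : Fin R → Bool,
      ((Finset.univ.filter (fun X : Fin k → Fin R → Bool => X l0 = x)).image F).card ≤ 2 := by
    by_contra hcon
    push Not at hcon
    have h3 : ∀ x : Fin R → Bool, ∃ e : Fin 3 → (Fin k → Fin R → Bool),
        (∀ i, e i l0 = x) ∧ Function.Injective (fun i => F (e i)) := by
      intro x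
      obtain ⟨a, ha, b, hb, c, hc, hab, hac, hbc⟩ := Finset.two_lt_card.1 (hcon x)
      simp only [Finset.mem_image, Finset.mem_filter, Finset.mem_univ, true_and] at ha hb hc
      obtain ⟨A, hA, rfl⟩ := ha
      obtain ⟨B, hB, rfl⟩ := hb
      obtain ⟨C, hC, rfl⟩ := hc
      refine ⟨![A, B, C], ?_, ?_⟩
      · intro i
        fin_cases i
        · exact hA
        · exact hB
        · exact hC
      · intro i j hij
        fin_cases i <;> fin_cases j <;> simp_all
    choose e he1 he2 using h3
    obtain ⟨γ, _, m, G, hγ, hm, hG⟩ := H l0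
    have hinj : Function.Injective
        (fun p : (Fin R → Bool) × Fin 3 => (F (e p.1 p.2), G (e p.1 p.2))) := by
      rintro ⟨v, i⟩ ⟨w, j⟩ h
      simp only [Prod.mk.injEq] at h
      have hvw := hG _ _ h.1 h.2
      rw [he1, he1] at hvw
      subst hvw
      have hij := he2 v h.1
      rw [hij]
    have hle := Fintype.card_le_of_injective _ hinj
    rw [Fintype.card_prod, Fintype.card_prod, hcardV, hγ, hβ, Fintype.card_fin, ← pow_add] at hle
    have h2 := Nat.pow_le_pow_right (by norm_num : 0 < 2) hm
    have hp : 0 < 2 ^ R := by positivity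
    rw [pow_succ] at h2
    omega
  set s := (Finset.univ.filter (fun X : Fin k → Fin R → Bool => X l0 = x)).image F with hs
  have hmem : ∀ X : Fin k → Fin R → Bool, X l0 = x → F X ∈ s := by
    intro X hX
    exact Finset.mem_image_of_mem _ (by simp [hX])
  obtain ⟨γ, _, m, G, hγ, hm, hG⟩ := H l1
  let X0 : Fin k → Fin R → Bool := fun _ => x
  have hu : ∀ v, Function.update X0 l1 v l0 = x := by
    intro v
    rw [Function.update_of_ne h01]
  let φ : (Fin R → Bool) → s × γ := fun v =>
    (⟨F (Function.update X0 l1 v), hmem _ (hu v)⟩, G (Function.update X0 l1 v))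
  have hφ : Function.Injective φ := by
    intro v w h
    simp only [φ, Prod.mk.injEq, Subtype.mk.injEq] at h
    simpa using hG _ _ h.1 h.2
  have hsurj : Function.Surjective φ := by
    refine (hφ.bijective_of_nat_card_le ?_).2
    rw [Nat.card_eq_fintype_card, Nat.card_eq_fintype_card, Fintype.card_prod, hcardV, hγ,
      Fintype.card_coe]
    calc s.card * 2 ^ m ≤ 2 * 2 ^ m := Nat.mul_le_mul_right _ hx
      _ = 2 ^ (m + 1) := by rw [pow_succ]; ring
      _ ≤ 2 ^ R := Nat.pow_le_pow_right (by norm_num) (by omega)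
  obtain ⟨v, hv⟩ := dep l2 X0
  have hY0 : Function.update X0 l2 v l0 = x := by rw [Function.update_of_ne h02]
  obtain ⟨w, hw⟩ := hsurj (⟨F (Function.update X0 l2 v), hmem _ hY0⟩, G (Function.update X0 l2 v))
  simp only [φ, Prod.mk.injEq, Subtype.mk.injEq] at hw
  have hwv := hG _ _ hw.1 hw.2
  rw [Function.update_self, Function.update_of_ne h12] at hwv
  apply hv
  rw [← hw.1, hwv, Function.update_eq_self]

theorem pir_sum_le {n k R : ℕ} (S : PIRScheme n k R) (hD : S.downloadComplexity = R + 1)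
    (q : (r : Fin n) → S.Q r) (hq : S.Possible q) : ∑ r : Fin n, S.d r (q r) ≤ R + 1 := by
  classical
  rw [← hD]
  unfold PIRScheme.downloadComplexity
  exact Finset.le_sup (f := fun q : (r : Fin n) → S.Q r => ∑ r, S.d r (q r)) (by simp [hq])

theorem pir_le_sum {n k R : ℕ} (S : PIRScheme n k R)
    (q : (r : Fin n) → S.Q r) (hq : S.Possible q) : R ≤ ∑ r : Fin n, S.d r (q r) := by
  classical
  obtain ⟨ℓ, hℓ⟩ := hq
  have hinj : Function.Injective (fun v : Fin R → Bool =>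
      (fun r => S.resp r (q r) (S.E r (fun _ => v)) : (r : Fin n) → Fin (S.d r (q r)) → Bool)) := by
    intro v w h
    have h1 := S.correct (fun _ => v) ℓ q hℓ
    have h2 := S.correct (fun _ => w) ℓ q hℓ
    simp only at h
    rw [h] at h1
    exact h1.symm.trans h2
  have hle := Fintype.card_le_of_injective _ hinj
  simp only [Fintype.card_pi, Fintype.card_bool, Finset.prod_const, Finset.card_univ,
    Fintype.card_fin, Finset.prod_pow_eq_pow_sum] at hle
  exact (Nat.pow_le_pow_iff_right (by norm_num : 1 < 2)).1 hle

theorem pir_exists_query {n k R : ℕ} (S : PIRScheme n k R)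
    (q : (r : Fin n) → S.Q r) (hq : S.Possible q) (r : Fin n) (ℓ : Fin k) :
    ∃ q' ∈ (S.D ℓ).support, q' r = q r := by
  obtain ⟨ℓ', hℓ'⟩ := hq
  have h : q r ∈ ((S.D ℓ').map (fun q => q r)).support := by
    rw [PMF.support_map]
    exact ⟨q, hℓ', rfl⟩
  rw [S.privacy r ℓ' ℓ, PMF.support_map] at h
  exact h

/-- Corollary 2 of the paper. In a PIR scheme for `k ≥ 3` records
of `R ≥ 1` bits with download complexity exactly `R + 1`, every server responds with
at most one bit to any possible query, and the total number of downloaded bits is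
`R` or `R + 1`. -/
theorem one_bit_per_server (n k R : ℕ) (hk : 3 ≤ k) (hR : 1 ≤ R)
    (S : PIRScheme n k R) (hD : S.downloadComplexity = R + 1) :
    ∀ q : (r : Fin n) → S.Q r, S.Possible q →
      (∀ r : Fin n, S.d r (q r) ≤ 1) ∧
      R ≤ ∑ r : Fin n, S.d r (q r) ∧ ∑ r : Fin n, S.d r (q r) ≤ R + 1 := by
  intro q hq
  refine ⟨fun r => ?_, pir_le_sum S q hq, pir_sum_le S hD q hq⟩
  classical
  refine pir_abstract_le_one hk (β := Fin (S.d r (q r)) → Bool) (by simp)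
    (fun X => S.resp r (q r) (S.E r X)) ?_
  intro ℓ
  obtain ⟨q', hq', hr⟩ := pir_exists_query S q hq r ℓ
  rw [← hr]
  refine ⟨(i : {i : Fin n // i ≠ r}) → Fin (S.d i (q' i)) → Bool, inferInstance,
    ∑ i : {i : Fin n // i ≠ r}, S.d i (q' i),
    fun X i => S.resp i (q' i) (S.E i X), ?_, ?_, ?_⟩
  · simp only [Fintype.card_pi, Fintype.card_bool, Finset.prod_const, Finset.card_univ,
      Fintype.card_fin, Finset.prod_pow_eq_pow_sum]
  · have h1 := pir_sum_le S hD q' ⟨ℓ, hq'⟩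
    rw [Fintype.sum_eq_add_sum_subtype_ne (fun i => S.d i (q' i)) r] at h1
    exact h1
  · intro X Y hF hG
    have h1 := S.correct X ℓ q' hq'
    have h2 := S.correct Y ℓ q' hq'
    have h3 : (fun i => S.resp i (q' i) (S.E i X)) = fun i => S.resp i (q' i) (S.E i Y) := by
      funext i
      by_cases hi : i = r
      · subst hi
        exact hF
      · exact congrFun hG ⟨i, hi⟩
    rw [h3] at h1
    exact h1.symm.trans h2
end

section
/- Let n ≥ 2 and R ≥ 1 be integers with (n−1) dividing R, and let k ≥ R/(n−1) + 1. Then the minimum download complexity over all n-server PIR schemes for a database of k records of R bits each is exactly (n/(n−1))·R: every such scheme has download complexity at least (n/(n−1))·R, and there exists such a scheme with download complexity exactly (n/(n−1))·R. -/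
open scoped ENNReal

open Finset in
/-- Number of values of `g` on databases agreeing with `X` on the first `j` records. -/
def pirN {k R : ℕ} {β : Type*} [DecidableEq β] (g : (Fin k → Fin R → Bool) → β) (j : ℕ)
    (X : Fin k → Fin R → Bool) : ℕ :=
  ((univ.filter (fun Y : Fin k → Fin R → Bool => ∀ i : Fin k, i.val < j → Y i = X i)).image g).card

open Finset in
/-- Average conditional Hartley entropy. -/
noncomputable def pirH {k R : ℕ} {β : Type*} [DecidableEq β]
    (g : (Fin k → Fin R → Bool) → β) (j : ℕ) : ℝ :=
  (∑ X : Fin k → Fin R → Bool, Real.logb 2 (pirN g j X)) /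
    (Fintype.card (Fin k → Fin R → Bool))

section PIRHelpers

open Finset

theorem pirN_pos {k R : ℕ} {β : Type*} [DecidableEq β] (g : (Fin k → Fin R → Bool) → β) (j : ℕ)
    (X : Fin k → Fin R → Bool) : 1 ≤ pirN g j X := by
  unfold pirN
  rw [Nat.one_le_iff_ne_zero, ← Nat.pos_iff_ne_zero, card_pos]
  exact ⟨g X, mem_image_of_mem _ (by simp)⟩

theorem pirH_le_of {k R : ℕ} {β γ : Type*} [DecidableEq β] [DecidableEq γ]
    (g : (Fin k → Fin R → Bool) → β) (h : (Fin k → Fin R → Bool) → γ) (j j' : ℕ)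
    (H : ∀ X, pirN g j X ≤ pirN h j' X) : pirH g j ≤ pirH h j' := by
  unfold pirH
  gcongr with X
  · norm_num
  · exact_mod_cast pirN_pos g j X
  · exact H X

theorem pirH_nonneg {k R : ℕ} {β : Type*} [DecidableEq β] (g : (Fin k → Fin R → Bool) → β)
    (j : ℕ) : 0 ≤ pirH g j := by
  unfold pirH
  refine div_nonneg (sum_nonneg fun X _ => Real.logb_nonneg (by norm_num) ?_) (by positivity)
  exact_mod_cast pirN_pos g j X

theorem pirH_comp {k R : ℕ} {β γ : Type*} [DecidableEq β] [DecidableEq γ]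
    (g : (Fin k → Fin R → Bool) → β) (φ : β → γ) (j : ℕ) :
    pirH (fun Y => φ (g Y)) j ≤ pirH g j := by
  apply pirH_le_of
  intro X
  unfold pirN
  rw [show (fun Y => φ (g Y)) = φ ∘ g from rfl, ← image_image]
  exact card_image_le

theorem pirH_pi {k R n : ℕ} {β : Fin n → Type*} [∀ r, DecidableEq (β r)]
    (g : (Fin k → Fin R → Bool) → ∀ r, β r) (j : ℕ) :
    pirH g j ≤ ∑ r, pirH (fun Y => g Y r) j := by
  unfold pirH
  rw [← sum_div, sum_comm]
  gcongr with X
  rw [← Real.logb_prod]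
  · apply Real.logb_le_logb_of_le (by norm_num)
    · exact_mod_cast pirN_pos g j X
    · norm_cast
      unfold pirN
      rw [← Fintype.card_piFinset]
      apply card_le_card
      intro y hy
      rw [mem_image] at hy
      obtain ⟨Y, hY, rfl⟩ := hy
      rw [Fintype.mem_piFinset]
      intro r
      exact mem_image_of_mem (fun Y => g Y r) hY
  · intro r _
    have := pirN_pos (fun Y => g Y r) j X
    positivity

theorem pirH_le_bits {k R n : ℕ} (d : Fin n → ℕ)
    (g : (Fin k → Fin R → Bool) → ∀ r, (Fin (d r) → Bool)) (j : ℕ) :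
    pirH g j ≤ ((∑ r, d r : ℕ) : ℝ) := by
  unfold pirH
  rw [div_le_iff₀ (by exact_mod_cast Fintype.card_pos)]
  have : ∀ X ∈ (univ : Finset (Fin k → Fin R → Bool)),
      Real.logb 2 (pirN g j X) ≤ ((∑ r, d r : ℕ) : ℝ) := by
    intro X _
    have h1 : pirN g j X ≤ 2 ^ (∑ r, d r) := by
      unfold pirN
      refine (card_le_univ _).trans (le_of_eq ?_)
      simp [Finset.prod_pow_eq_pow_sum]
    have h2 : ((2:ℝ) ^ (∑ r, d r : ℕ)) = (2:ℝ) ^ (((∑ r, d r : ℕ) : ℝ)) := by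
      rw [Real.rpow_natCast]
    rw [Real.logb_le_iff_le_rpow (by norm_num) (by exact_mod_cast pirN_pos g j X), ← h2]
    exact_mod_cast h1
  refine (sum_le_card_nsmul _ _ _ this).trans (le_of_eq ?_)
  rw [nsmul_eq_mul, mul_comm, card_univ]

theorem pirN_step {k R : ℕ} {β : Type*} [DecidableEq β] (g : (Fin k → Fin R → Bool) → β)
    (l : Fin k) (rec : β → Fin R → Bool) (hrec : ∀ Y, rec (g Y) = Y l)
    (X : Fin k → Fin R → Bool) :
    ∑ x, pirN g (l.val + 1) (Function.update X l x) ≤ pirN g l.val X := by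
  unfold pirN
  rw [← card_biUnion]
  · apply card_le_card
    intro b hb
    simp only [mem_biUnion, mem_univ, true_and, mem_image, mem_filter] at hb ⊢
    obtain ⟨x, Y, hY, rfl⟩ := hb
    refine ⟨Y, fun i hi => ?_, rfl⟩
    rw [hY i (by omega), Function.update_of_ne]
    rintro rfl
    omega
  · intro x _ y _ hxy
    rw [Function.onFun, disjoint_left]
    intro b hb hb'
    simp only [mem_univ, true_and, mem_image, mem_filter] at hb hb'
    obtain ⟨Y, hY, rfl⟩ := hb
    obtain ⟨Z, hZ, hZY⟩ := hb'
    apply hxy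
    have h1 := hY l (by omega)
    have h2 := hZ l (by omega)
    rw [Function.update_self] at h1 h2
    rw [← h1, ← h2, ← hrec Y, ← hrec Z, hZY]

theorem pir_jensen {R : ℕ} (a : (Fin R → Bool) → ℝ) (ha : ∀ x, 0 < a x) :
    (R : ℝ) + (∑ x, Real.logb 2 (a x)) / 2 ^ R ≤ Real.logb 2 (∑ x, a x) := by
  have h := strictConcaveOn_log_Ioi.concaveOn.le_map_sum (t := (univ : Finset (Fin R → Bool)))
    (w := fun _ => 1 / 2 ^ R) (p := a) (fun _ _ => by positivity) (by simp) (fun x _ => ha x)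
  simp only [smul_eq_mul, ← mul_sum] at h
  have hs : 0 < ∑ x, a x := sum_pos (fun x _ => ha x) univ_nonempty
  rw [Real.log_mul (by positivity) hs.ne', Real.log_div (by norm_num) (by positivity),
    Real.log_one, Real.log_pow] at h
  have h2 : 0 < Real.log 2 := Real.log_pos (by norm_num)
  simp only [Real.logb, ← sum_div]
  rw [le_div_iff₀ h2]
  have : ((R:ℝ) + (∑ x, Real.log (a x)) / Real.log 2 / 2 ^ R) * Real.log 2
      = R * Real.log 2 + 1 / 2 ^ R * ∑ x, Real.log (a x) := by
    field_simp
  linarith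

theorem pir_sum_update {k R : ℕ} (l : Fin k) (F : (Fin k → Fin R → Bool) → ℝ) :
    ∑ X, ∑ x, F (Function.update X l x) = 2 ^ R * ∑ X, F X := by
  have h : ∑ p : (Fin k → Fin R → Bool) × (Fin R → Bool), F (Function.update p.1 l p.2)
      = ∑ p : (Fin k → Fin R → Bool) × (Fin R → Bool), F p.1 := by
    refine sum_bij' (fun p _ => (Function.update p.1 l p.2, p.1 l))
      (fun p _ => (Function.update p.1 l p.2, p.1 l)) ?_ ?_ ?_ ?_ ?_ <;> simp
  rw [Fintype.sum_prod_type, Fintype.sum_prod_type] at h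
  rw [h]
  simp [mul_sum]

theorem pirH_step {k R : ℕ} {β : Type*} [DecidableEq β] (g : (Fin k → Fin R → Bool) → β)
    (l : Fin k) (rec : β → Fin R → Bool) (hrec : ∀ Y, rec (g Y) = Y l) :
    (R : ℝ) + pirH g (l.val + 1) ≤ pirH g l.val := by
  have key : ∀ X, (R : ℝ) +
      (∑ x, Real.logb 2 (pirN g (l.val + 1) (Function.update X l x))) / 2 ^ R
      ≤ Real.logb 2 (pirN g l.val X) := by
    intro X
    refine (pir_jensen (fun x => (pirN g (l.val + 1) (Function.update X l x) : ℝ))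
      (fun x => by exact_mod_cast pirN_pos _ _ _)).trans ?_
    apply Real.logb_le_logb_of_le (by norm_num)
    · exact sum_pos (fun x _ => by exact_mod_cast pirN_pos _ _ _) univ_nonempty
    · exact_mod_cast pirN_step g l rec hrec X
  have h := sum_le_sum (fun X (_ : X ∈ (univ : Finset (Fin k → Fin R → Bool))) => key X)
  rw [sum_add_distrib, ← sum_div,
    pir_sum_update l (fun X => Real.logb 2 (pirN g (l.val + 1) X)),
    mul_div_cancel_left₀ _ (by positivity), sum_const, nsmul_eq_mul, card_univ] at h
  unfold pirH
  have hc : (0:ℝ) < (Fintype.card (Fin k → Fin R → Bool)) := by exact_mod_cast Fintype.card_pos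
  rw [le_div_iff₀ hc, add_mul, div_mul_cancel₀ _ hc.ne']
  linarith

/-- The response of one server as a function of the database. -/
def PIRScheme.ans {n k R : ℕ} (S : PIRScheme n k R) (r : Fin n) (q : S.Q r)
    (X : Fin k → Fin R → Bool) : Fin (S.d r q) → Bool := S.resp r q (S.E r X)

theorem PIRScheme.transfer {n k R : ℕ} (S : PIRScheme n k R) (l l' : Fin k)
    (q : (r : Fin n) → S.Q r) (hq : q ∈ (S.D l).support) (r : Fin n) :
    ∃ q' ∈ (S.D l').support, q' r = q r := by
  have h : q r ∈ ((S.D l).map (fun q => q r)).support := by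
    rw [PMF.support_map]; exact ⟨q, hq, rfl⟩
  rw [S.privacy r l l', PMF.support_map] at h
  exact h

theorem PIRScheme.step {n k R : ℕ} (S : PIRScheme n k R) (l : Fin k)
    (q : (r : Fin n) → S.Q r) (hq : q ∈ (S.D l).support) (r : Fin n) :
    (R : ℝ) + pirH (S.ans r (q r)) (l.val + 1) ≤
      pirH (fun X (r : Fin n) => S.ans r (q r) X) l.val := by
  have h1 := pirH_step (fun X (r : Fin n) => S.ans r (q r) X) l (S.recon l q)
    (fun Y => S.correct Y l q hq)
  have h2 := pirH_comp (fun X (r : Fin n) => S.ans r (q r) X) (fun y => y r) (l.val + 1)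
  have h3 : pirH (S.ans r (q r)) (l.val + 1) ≤ _ := h2
  linarith

theorem PIRScheme.induct {n m k : ℕ} (hn : 2 ≤ n) (hk : 0 < k)
    (S : PIRScheme n k ((n - 1) * m)) (t : ℕ) (ht : t ≤ k) :
    ∃ (l : Fin k) (q : (r : Fin n) → S.Q r) (r : Fin n), q ∈ (S.D l).support ∧
      (m : ℝ) * (1 - (1 / n) ^ t) ≤ pirH (S.ans r (q r)) (k - t) := by
  induction t with
  | zero =>
    obtain ⟨q, hq⟩ := (S.D ⟨0, hk⟩).support_nonempty
    exact ⟨⟨0, hk⟩, q, ⟨0, by omega⟩, hq, by simpa using pirH_nonneg _ _⟩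
  | succ t ih =>
    obtain ⟨l, q, r, hq, h⟩ := ih (by omega)
    let l' : Fin k := ⟨k - (t + 1), by omega⟩
    obtain ⟨q', hq', hr⟩ := S.transfer l l' q hq r
    have h1 := S.step l' q' hq' r
    rw [hr, show l'.val + 1 = k - t by simp only [l']; omega] at h1
    have h2 := pirH_pi (fun X (r : Fin n) => S.ans r (q' r) X) l'.val
    have hn0 : (0:ℝ) < n := by exact_mod_cast (by omega : 0 < n)
    have h3 : ∃ r' ∈ (univ : Finset (Fin n)), (m : ℝ) * (1 - (1 / n) ^ (t + 1)) ≤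
        pirH (fun X => S.ans r' (q' r') X) l'.val := by
      apply exists_le_of_sum_le ⟨⟨0, by omega⟩, mem_univ _⟩
      refine le_trans (le_of_eq ?_) ((add_le_add_right h _).trans (h1.trans h2))
      rw [sum_const, card_univ, Fintype.card_fin, nsmul_eq_mul]
      push_cast [Nat.cast_sub (by omega : 1 ≤ n)]
      rw [pow_succ]
      field_simp
      ring
    obtain ⟨r', -, h4⟩ := h3
    exact ⟨l', q', r', hq', h4⟩

theorem PIRScheme.lower {n m k : ℕ} (hn : 2 ≤ n) (hk : m + 1 ≤ k)
    (S : PIRScheme n k ((n - 1) * m)) : n * m ≤ S.downloadComplexity := by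
  obtain ⟨l, q, r, hq, h⟩ := S.induct hn (by omega) (k - 1) (by omega)
  obtain ⟨q', hq', hr⟩ := S.transfer l ⟨0, by omega⟩ q hq r
  have h1 := S.step _ q' hq' r
  have h2 := pirH_le_bits (fun r => S.d r (q' r)) (fun X (r : Fin n) => S.ans r (q' r) X) 0
  rw [hr] at h1
  rw [show k - (k - 1) = 1 by omega] at h
  have h3 : ∑ r, S.d r (q' r) ≤ S.downloadComplexity := by
    unfold PIRScheme.downloadComplexity
    exact le_sup (f := fun q : ((r : Fin n) → S.Q r) => ∑ r, S.d r (q r))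
      (by simp only [mem_filter, mem_univ, true_and]; exact ⟨_, hq'⟩)
  have h4 : (m : ℝ) * (1 / n) ^ (k - 1) < 1 := by
    have : m < n ^ (k - 1) := by
      calc m ≤ k - 1 := by omega
        _ < n ^ (k - 1) := Nat.lt_pow_self (by omega)
    have h' : (m : ℝ) < (n : ℝ) ^ (k - 1) := by exact_mod_cast this
    have hp : (0 : ℝ) < (n : ℝ) ^ (k - 1) := lt_of_le_of_lt (by positivity) h'
    rw [one_div, inv_pow, ← div_eq_mul_inv, div_lt_one hp]
    exact h'
  have h5 : ((n * m : ℕ) : ℝ) < ((∑ r, S.d r (q' r) : ℕ) : ℝ) + 1 := by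
    have e : (((n - 1) * m : ℕ) : ℝ) = n * m - m := by
      push_cast [Nat.cast_sub (by omega : 1 ≤ n)]; ring
    rw [e] at h1
    have h6 := h1.trans h2
    simp only [zero_add] at h6
    rw [mul_sub, mul_one] at h
    push_cast at h6 ⊢
    linarith
  have h6 : n * m < ∑ r, S.d r (q' r) + 1 := by exact_mod_cast h5
  omega

/-- Bit to `ZMod 2`. -/
def pirB (b : Bool) : ZMod 2 := if b then 1 else 0

theorem pirB_inj (b : Bool) : decide (pirB b = 1) = b := by cases b <;> decide

theorem pirB_dec (z : ZMod 2) : pirB (decide (z = 1)) = z := by revert z; decide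

/-- The block of a record selected by `v`; block `0` is zero. -/
def pirBlock {p m : ℕ} (x : Fin ((p + 1) * m) → Bool) (v : Fin (p + 2)) (t : Fin m) : ZMod 2 :=
  Fin.cases (motive := fun _ => ZMod 2) 0 (fun j => pirB (x (finProdFinEquiv (j, t)))) v

theorem pir_map_uniform {α : Type*} [Fintype α] [Nonempty α] (e : α ≃ α) :
    (PMF.uniformOfFintype α).map e = PMF.uniformOfFintype α := by
  ext a
  rw [PMF.map_apply, tsum_eq_single (e.symm a)]
  · simp
  · intro b hb
    rw [if_neg]
    rintro rfl
    simp at hb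

/-- The optimal scheme. -/
noncomputable def pirScheme (p m k : ℕ) : PIRScheme (p + 2) k ((p + 1) * m) where
  Q _ := Fin k → Fin (p + 2)
  fintypeQ _ := inferInstance
  s _ := k * ((p + 1) * m)
  E _ X := fun a => X (finProdFinEquiv.symm a).1 (finProdFinEquiv.symm a).2
  D l := (PMF.uniformOfFintype (Fin k → Fin (p + 2))).map
    (fun F r => F + Pi.single l r)
  d _ _ := m
  resp _ q w := fun t =>
    decide ((∑ i, pirBlock (fun a => w (finProdFinEquiv (i, a))) (q i) t) = 1)
  recon l q c := fun a =>
    decide (pirB (c ((finProdFinEquiv.symm a).1.succ - q 0 l) (finProdFinEquiv.symm a).2) -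
      pirB (c (0 - q 0 l) (finProdFinEquiv.symm a).2) = 1)
  correct := by
    intro X l q hq
    rw [PMF.support_map] at hq
    obtain ⟨F, -, rfl⟩ := hq
    funext a
    obtain ⟨⟨j, t⟩, rfl⟩ := finProdFinEquiv.surjective a
    simp only [Equiv.symm_apply_apply, pirB_dec]
    rw [← sum_sub_distrib, sum_eq_single l]
    · simp [pirBlock, pirB_inj]
    · intro i _ hi
      simp [hi]
    · simp
  privacy := by
    intro r l l'
    have : ∀ l : Fin k, ((PMF.uniformOfFintype (Fin k → Fin (p + 2))).map
        (fun F (r : Fin (p + 2)) => F + Pi.single l r)).map (fun q => q r) =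
        PMF.uniformOfFintype (Fin k → Fin (p + 2)) := by
      intro l
      rw [PMF.map_comp]
      exact pir_map_uniform (Equiv.addRight (Pi.single l r : Fin k → Fin (p + 2)))
    rw [this, this]

theorem pirScheme_download (p m k : ℕ) (hk : 0 < k) :
    (pirScheme p m k).downloadComplexity = (p + 2) * m := by
  unfold PIRScheme.downloadComplexity
  have hd : ∀ q : (r : Fin (p + 2)) → (pirScheme p m k).Q r,
      ∑ r, (pirScheme p m k).d r (q r) = (p + 2) * m := by
    intro q
    have : ∀ r, (pirScheme p m k).d r (q r) = m := fun r => rfl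
    simp [this]
  simp only [hd]
  apply sup_const
  obtain ⟨q, hq⟩ := ((pirScheme p m k).D ⟨0, hk⟩).support_nonempty
  exact ⟨q, by simp only [mem_filter, mem_univ, true_and]; exact ⟨_, hq⟩⟩

end PIRHelpers

/-- For `n ≥ 2`, `(n-1) ∣ R` and `k ≥ R/(n-1) + 1`, the minimum
download complexity over all `n`-server PIR schemes for `k` records of `R` bits
each is exactly `(n/(n-1))·R`: every such scheme has download complexity at least
`n·(R/(n-1))`, and some scheme attains it. -/
theorem optimal_download_complexity (n k R : ℕ) (hn : 2 ≤ n) (hR : 1 ≤ R)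
    (hdvd : (n - 1) ∣ R) (hk : R / (n - 1) + 1 ≤ k) :
    (∀ S : PIRScheme n k R, n * (R / (n - 1)) ≤ S.downloadComplexity) ∧
    (∃ S : PIRScheme n k R, S.downloadComplexity = n * (R / (n - 1))) := by
  obtain ⟨p, rfl⟩ : ∃ p, n = p + 2 := ⟨n - 2, by omega⟩
  obtain ⟨m, rfl⟩ := hdvd
  have hm : (p + 2 - 1) * m / (p + 2 - 1) = m := Nat.mul_div_cancel_left _ (by omega)
  rw [hm] at hk ⊢
  exact ⟨fun S => S.lower hn hk, pirScheme p m k, pirScheme_download p m k (by omega)⟩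
end
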